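/- Fix 0 < α ≤ 2 and t > 0. For all z, w in the open sector Δ_α, t^{-α} ∫_0^t K_α(z,t-τ) · conj(K_α(w,t-τ)) · τ^α dτ = (4 z · conj(w) / (α B(α/2, α/2))) · exp(-(α²/(4t)) (z^{2/α} + conj(w)^{2/α})) · (z^{2/α} + conj(w)^{2/α})^{-(α+1)}, where B denotes the Beta function and the complex power (z^{2/α} + conj(w)^{2/α})^{-(α+1)} is taken with the principal branch (the base has positive real part). -/

import Mathlib

open MeasureTheory Filter Set Complex

/-- The open sector `Δ_α = {z ≠ 0 : |arg z| < πα/4}`. -/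
def sector (α : ℝ) : Set ℂ :=
  {z : ℂ | z ≠ 0 ∧ |Complex.arg z| < Real.pi * α / 4}

/-- The complex kernel `K_α(z,s) = (α^α/(2^α Γ(α/2))) z s^{-(α/2+1)} exp(-α² z^{2/α}/(4s))`,
where `z^{2/α}` is taken with the principal branch. -/
noncomputable def Kc (α : ℝ) (z : ℂ) (s : ℝ) : ℂ :=
  ((α ^ α / (2 ^ α * Real.Gamma (α / 2)) : ℝ) : ℂ) * z * (((s ^ (-(α / 2 + 1)) : ℝ)) : ℂ) *
    Complex.exp (-(α ^ 2 : ℂ) * z ^ (((2 / α : ℝ)) : ℂ) / (4 * (s : ℂ)))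

/-- The transform `(L_t^α g)(z) = t^{-α} ∫_0^t K_α(z,t-τ) g(τ) τ^α dτ`. -/
noncomputable def Lc (α t : ℝ) (g : ℝ → ℂ) (z : ℂ) : ℂ :=
  ((t ^ (-α) : ℝ) : ℂ) *
    ∫ τ in Set.Ioo (0 : ℝ) t, Kc α z (t - τ) * g τ * ((τ ^ α : ℝ) : ℂ)

/-- The Beta function `B(a,b) = Γ(a)Γ(b)/Γ(a+b)`. -/
noncomputable def betaFn (a b : ℝ) : ℝ := Real.Gamma a * Real.Gamma b / Real.Gamma (a + b)


lemma aux_gamma (a : ℝ) (ha : 0 < a) (r : ℂ) (hr : 0 < r.re) :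
    ∫ x in Ioi (0 : ℝ), ((x ^ a : ℝ) : ℂ) * Complex.exp (-(r * x)) =
      r ^ ((-(a + 1) : ℝ) : ℂ) * ((Real.Gamma (a + 1) : ℝ) : ℂ) := by
  have hopen : IsOpen {r : ℂ | 0 < r.re} := isOpen_lt continuous_const Complex.continuous_re
  have hconv : Convex ℝ {r : ℂ | 0 < r.re} := convex_halfSpace_re_gt 0
  have hmeas : ∀ (b : ℝ) (r : ℂ), AEStronglyMeasurable
      (fun x : ℝ => ((x ^ b : ℝ) : ℂ) * Complex.exp (-(r * x))) (volume.restrict (Ioi 0)) := by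
    intro b r
    apply Measurable.aestronglyMeasurable
    fun_prop
  have hnorm : ∀ (b : ℝ) (r : ℂ) (x : ℝ), 0 < x →
      ‖((x ^ b : ℝ) : ℂ) * Complex.exp (-(r * x))‖ = x ^ b * Real.exp (-r.re * x) := by
    intro b r x hx
    rw [norm_mul, Complex.norm_exp, Complex.norm_real, Real.norm_of_nonneg (by positivity)]
    simp
  have hintR : ∀ (b c : ℝ), 0 < b → 0 < c →
      IntegrableOn (fun x : ℝ => x ^ b * Real.exp (-c * x)) (Ioi 0) := by
    intro b c hb hc
    have := integrableOn_rpow_mul_exp_neg_mul_rpow (p := 1) (s := b) (b := c)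
      (by linarith) one_pos hc
    simpa using this
  have hF : DifferentiableOn ℂ
      (fun r : ℂ => ∫ x in Ioi (0 : ℝ), ((x ^ a : ℝ) : ℂ) * Complex.exp (-(r * x)))
      {r : ℂ | 0 < r.re} := by
    intro r hr
    have hr : 0 < r.re := hr
    have hs : {q : ℂ | r.re / 2 < q.re} ∈ nhds r :=
      (isOpen_lt continuous_const Complex.continuous_re).mem_nhds (by simp; linarith)
    have := hasDerivAt_integral_of_dominated_loc_of_deriv_le (μ := volume.restrict (Ioi (0 : ℝ)))
      (F := fun (r : ℂ) (x : ℝ) => ((x ^ a : ℝ) : ℂ) * Complex.exp (-(r * x)))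
      (F' := fun (r : ℂ) (x : ℝ) => ((x ^ a : ℝ) : ℂ) * (Complex.exp (-(r * x)) * (-x)))
      (bound := fun x => x ^ (a + 1) * Real.exp (-(r.re / 2) * x)) hs
      (Eventually.of_forall (hmeas a)) ?_ ?_ ?_ ?_ ?_
    · exact this.2.differentiableAt.differentiableWithinAt
    · refine (hintR a r.re ha hr).mono' (hmeas a r) ?_
      filter_upwards [ae_restrict_mem measurableSet_Ioi] with x hx
      exact (hnorm a r x hx).le
    · apply Measurable.aestronglyMeasurable
      fun_prop
    · filter_upwards [ae_restrict_mem measurableSet_Ioi] with x hx q hq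
      have hx : 0 < x := hx
      have hq : r.re / 2 < q.re := hq
      rw [← mul_assoc, norm_mul, hnorm a q x hx, norm_neg, Complex.norm_real,
        Real.norm_of_nonneg hx.le, Real.rpow_add_one hx.ne']
      have : Real.exp (-q.re * x) ≤ Real.exp (-(r.re / 2) * x) := by
        apply Real.exp_le_exp.2
        nlinarith
      have h2 : 0 ≤ x ^ a * x := by positivity
      nlinarith
    · exact hintR (a + 1) (r.re / 2) (by linarith) (by linarith)
    · refine Eventually.of_forall fun x q _ => ?_
      have h1 : HasDerivAt (fun q : ℂ => -(q * (x : ℂ))) (-(x : ℂ)) q := by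
        exact ((hasDerivAt_id q).mul_const (x : ℂ)).neg.congr_deriv (by simp)
      exact (h1.cexp).const_mul _
  have hG : DifferentiableOn ℂ
      (fun r : ℂ => r ^ ((-(a + 1) : ℝ) : ℂ) * ((Real.Gamma (a + 1) : ℝ) : ℂ))
      {r : ℂ | 0 < r.re} := by
    intro r hr
    have : r ∈ slitPlane := Or.inl hr
    exact ((differentiableAt_id.cpow_const this).mul_const _).differentiableWithinAt
  refine (hF.analyticOnNhd hopen).eqOn_of_preconnected_of_frequently_eq (hG.analyticOnNhd hopen)
    hconv.isPreconnected (z₀ := ((1 : ℝ) : ℂ)) (by simp) ?_ hr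
  have h_real : ∃ᶠ (y : ℝ) in nhdsWithin 1 {1}ᶜ,
      ∫ x in Ioi (0 : ℝ), ((x ^ a : ℝ) : ℂ) * Complex.exp (-((y : ℂ) * x)) =
      (y : ℂ) ^ ((-(a + 1) : ℝ) : ℂ) * ((Real.Gamma (a + 1) : ℝ) : ℂ) := by
    apply Eventually.frequently
    have : ∀ᶠ y : ℝ in nhds 1, 0 < y := lt_mem_nhds one_pos
    filter_upwards [nhdsWithin_le_nhds this] with y hy
    have h := Real.integral_rpow_mul_exp_neg_mul_Ioi (a := a + 1) (r := y) (by linarith) hy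
    rw [← Complex.ofReal_cpow hy.le, ← Complex.ofReal_mul, Real.rpow_neg hy.le,
      ← Real.inv_rpow hy.le, ← one_div, ← h, ← integral_complex_ofReal]
    simp
  rw [frequently_iff_seq_forall] at h_real ⊢
  obtain ⟨xs, hx_tendsto, hx_eq⟩ := h_real
  refine ⟨fun n ↦ xs n, ?_, fun n ↦ hx_eq n⟩
  rw [tendsto_nhdsWithin_iff] at hx_tendsto ⊢
  constructor
  · rw [tendsto_ofReal_iff]
    exact hx_tendsto.1
  · simpa using hx_tendsto.2

lemma aux_re (α : ℝ) (hα : 0 < α) (z : ℂ) (hz : z ∈ sector α) :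
    0 < (z ^ (((2 / α : ℝ)) : ℂ)).re := by
  obtain ⟨hz0, hz⟩ := hz
  rw [Complex.cpow_def_of_ne_zero hz0, Complex.exp_re]
  apply mul_pos (Real.exp_pos _)
  have : (Complex.log z * ((2 / α : ℝ) : ℂ)).im = z.arg * (2 / α) := by
    rw [Complex.im_mul_ofReal, Complex.log_im]
  rw [this]
  have h : |z.arg * (2 / α)| < Real.pi / 2 := by
    rw [abs_mul, abs_of_pos (show 0 < 2 / α by positivity)]
    calc _ < Real.pi * α / 4 * (2 / α) := by gcongr
      _ = _ := by field_simp; norm_num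
  exact Real.cos_pos_of_mem_Ioo (abs_lt.1 h)

lemma aux_image (t : ℝ) (ht : 0 < t) :
    (fun u : ℝ => t - (u + t⁻¹)⁻¹) '' Ioi 0 = Ioo 0 t := by
  ext τ
  constructor
  · rintro ⟨u, hu, rfl⟩
    have hu : 0 < u := hu
    have h1 : (u + t⁻¹)⁻¹ < t := by
      rw [inv_lt_comm₀ (by positivity) ht]; linarith
    have h2 : 0 < (u + t⁻¹)⁻¹ := by positivity
    constructor <;> simp only <;> linarith
  · rintro ⟨h1, h2⟩
    refine ⟨(t - τ)⁻¹ - t⁻¹, ?_, ?_⟩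
    · have : t⁻¹ < (t - τ)⁻¹ := by
        apply inv_strictAnti₀ <;> linarith
      simpa using this
    · simp

lemma aux_real (α t u : ℝ) (ht : 0 < t) (hu : 0 < u) :
    ((u + t⁻¹) ^ 2)⁻¹ * (((u + t⁻¹)⁻¹ ^ (-(α / 2 + 1))) * ((u + t⁻¹)⁻¹ ^ (-(α / 2 + 1))) *
      (t - (u + t⁻¹)⁻¹) ^ α) = t ^ α * u ^ α := by
  have hp : 0 < u + t⁻¹ := by positivity
  have h1 : t - (u + t⁻¹)⁻¹ = t * u * (u + t⁻¹)⁻¹ := by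
    field_simp
    ring
  rw [h1, Real.mul_rpow (by positivity) (by positivity), Real.mul_rpow ht.le hu.le,
    ← Real.rpow_add (by positivity), ← inv_pow, ← Real.rpow_natCast]
  set s := (u + t⁻¹)⁻¹ with hs
  have hs0 : 0 < s := by positivity
  have : s ^ ((2 : ℕ) : ℝ) * s ^ (-(α / 2 + 1) + -(α / 2 + 1)) * s ^ α = 1 := by
    rw [← Real.rpow_add hs0, ← Real.rpow_add hs0]
    convert Real.rpow_zero s using 2
    push_cast; ring
  linear_combination t ^ α * u ^ α * this

lemma aux_const (α : ℝ) (hα : 0 < α) :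
    (α ^ α / (2 ^ α * Real.Gamma (α / 2))) ^ 2 * (α ^ 2 / 4) ^ (-(α + 1)) * Real.Gamma (α + 1) =
      4 / (α * betaFn (α / 2) (α / 2)) := by
  have h2 : (α ^ 2 / 4) ^ (-(α + 1)) = (2 ^ α) ^ 2 * 4 / ((α ^ α) ^ 2 * α ^ 2) := by
    have : α ^ 2 / 4 = (α / 2) ^ (2 : ℝ) := by norm_num [div_pow]
    rw [this, ← Real.rpow_mul (by positivity), show 2 * -(α + 1) = -(α + α + 2) by ring,
      Real.rpow_neg (by positivity), Real.rpow_add (by positivity), Real.rpow_add (by positivity),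
      Real.div_rpow hα.le (by norm_num), Real.rpow_two]
    field_simp
    norm_num
  have hG := Real.Gamma_pos_of_pos (show 0 < α / 2 by positivity)
  have hG' := Real.Gamma_pos_of_pos hα
  have ha := Real.rpow_pos_of_pos hα α
  have hb := Real.rpow_pos_of_pos (show (0 : ℝ) < 2 by norm_num) α
  rw [h2, betaFn, Real.Gamma_add_one hα.ne', add_halves]
  field_simp

theorem stmt12 (α t : ℝ) (hα : 0 < α) (hα2 : α ≤ 2) (ht : 0 < t)
    (z w : ℂ) (hz : z ∈ sector α) (hw : w ∈ sector α) :
    ((t ^ (-α) : ℝ) : ℂ) *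
        ∫ τ in Set.Ioo (0 : ℝ) t,
          Kc α z (t - τ) * (starRingEnd ℂ) (Kc α w (t - τ)) * ((τ ^ α : ℝ) : ℂ) =
      (4 * z * (starRingEnd ℂ) w / ((α : ℂ) * ((betaFn (α / 2) (α / 2) : ℝ) : ℂ))) *
        Complex.exp (-((α ^ 2 : ℂ) / (4 * (t : ℂ))) *
          (z ^ (((2 / α : ℝ)) : ℂ) + (starRingEnd ℂ) (w ^ (((2 / α : ℝ)) : ℂ)))) *
        (z ^ (((2 / α : ℝ)) : ℂ) + (starRingEnd ℂ) (w ^ (((2 / α : ℝ)) : ℂ))) ^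
          ((-(α + 1) : ℝ) : ℂ) := by
  have hzre := aux_re α hα z hz
  have hwre := aux_re α hα w hw
  unfold Kc
  set Z := z ^ (((2 / α : ℝ)) : ℂ) with hZ
  set W := w ^ (((2 / α : ℝ)) : ℂ) with hW
  set S := Z + (starRingEnd ℂ) W with hS
  have hSre : 0 < S.re := by simp [hS]; linarith
  set C := α ^ α / (2 ^ α * Real.Gamma (α / 2)) with hC
  have hderiv : ∀ u ∈ Ioi (0 : ℝ), HasDerivWithinAt (fun u : ℝ => t - (u + t⁻¹)⁻¹)
      ((u + t⁻¹) ^ 2)⁻¹ (Ioi 0) u := by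
    intro u hu
    have hu : 0 < u := hu
    have hp : u + t⁻¹ ≠ 0 := by positivity
    have := (((hasDerivAt_id u).add_const t⁻¹).inv hp).const_sub t
    exact this.hasDerivWithinAt.congr_deriv (by simp [neg_div])
  have hinj : InjOn (fun u : ℝ => t - (u + t⁻¹)⁻¹) (Ioi 0) := by
    intro u _ v _ h
    simpa using h
  rw [← aux_image t ht, integral_image_eq_integral_abs_deriv_smul measurableSet_Ioi hderiv hinj]
  have hcongr : ∀ u ∈ Ioi (0 : ℝ), (|((u + t⁻¹) ^ 2)⁻¹| •
      ((C : ℂ) * z * (((t - (t - (u + t⁻¹)⁻¹)) ^ (-(α / 2 + 1)) : ℝ) : ℂ) *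
        Complex.exp (-(α ^ 2 : ℂ) * Z / (4 * ((t - (t - (u + t⁻¹)⁻¹) : ℝ) : ℂ))) *
        (starRingEnd ℂ) ((C : ℂ) * w * (((t - (t - (u + t⁻¹)⁻¹)) ^ (-(α / 2 + 1)) : ℝ) : ℂ) *
        Complex.exp (-(α ^ 2 : ℂ) * W / (4 * ((t - (t - (u + t⁻¹)⁻¹) : ℝ) : ℂ)))) *
        (((t - (u + t⁻¹)⁻¹) ^ α : ℝ) : ℂ))) =
      ((C : ℂ) ^ 2 * z * (starRingEnd ℂ) w * ((t ^ α : ℝ) : ℂ) *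
        Complex.exp (-((α ^ 2 : ℂ) / (4 * (t : ℂ))) * S)) *
      (((u ^ α : ℝ) : ℂ) * Complex.exp (-((((α ^ 2 / 4 : ℝ) : ℂ) * S) * u))) := by
    intro u hu
    have hu : 0 < u := hu
    have hp : 0 < u + t⁻¹ := by positivity
    have hpc : (u : ℂ) + (t : ℂ)⁻¹ ≠ 0 := by exact_mod_cast hp.ne'
    have htc : (t : ℂ) ≠ 0 := by exact_mod_cast ht.ne'
    have hR := congrArg (fun x : ℝ => (x : ℂ)) (aux_real α t u ht hu)
    have hE : Complex.exp (-(α ^ 2 : ℂ) * Z / (4 * (((u + t⁻¹)⁻¹ : ℝ) : ℂ))) *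
        (starRingEnd ℂ) (Complex.exp (-(α ^ 2 : ℂ) * W / (4 * (((u + t⁻¹)⁻¹ : ℝ) : ℂ)))) =
        Complex.exp (-((α ^ 2 : ℂ) / (4 * (t : ℂ))) * S) *
        Complex.exp (-((((α ^ 2 / 4 : ℝ) : ℂ) * S) * u)) := by
      rw [← Complex.exp_conj, ← Complex.exp_add, ← Complex.exp_add]
      congr 1
      simp only [map_div₀, map_mul, map_neg, map_pow, Complex.conj_ofReal, map_ofNat, hS]
      push_cast
      field_simp
      ring
    rw [abs_of_pos (by positivity), sub_sub_cancel, Complex.real_smul]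
    simp only [map_mul, Complex.conj_ofReal]
    simp only [Complex.ofReal_mul] at hR
    generalize Complex.exp (-(α ^ 2 : ℂ) * Z / (4 * (((u + t⁻¹)⁻¹ : ℝ) : ℂ))) = E1 at *
    generalize (starRingEnd ℂ) (Complex.exp (-(α ^ 2 : ℂ) * W / (4 * (((u + t⁻¹)⁻¹ : ℝ) : ℂ)))) = E2 at *
    generalize Complex.exp (-((α ^ 2 : ℂ) / (4 * (t : ℂ))) * S) = E3 at *
    generalize Complex.exp (-((((α ^ 2 / 4 : ℝ) : ℂ) * S) * u)) = E4 at *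
    linear_combination (C : ℂ) ^ 2 * z * (starRingEnd ℂ) w * E1 * E2 * hR +
      (C : ℂ) ^ 2 * z * (starRingEnd ℂ) w * ((t ^ α : ℝ) : ℂ) * ((u ^ α : ℝ) : ℂ) * hE
  rw [setIntegral_congr_fun measurableSet_Ioi hcongr, integral_const_mul,
    aux_gamma α hα _ (by rw [Complex.re_ofReal_mul]; positivity)]
  have hpow : (((α ^ 2 / 4 : ℝ) : ℂ) * S) ^ ((-(α + 1) : ℝ) : ℂ) =
      (((α ^ 2 / 4) ^ (-(α + 1)) : ℝ) : ℂ) * S ^ ((-(α + 1) : ℝ) : ℂ) := by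
    have hc : 0 < α ^ 2 / 4 := by positivity
    have hS0 : S ≠ 0 := by
      intro h
      simp [h] at hSre
    have hcc : ((α ^ 2 / 4 : ℝ) : ℂ) ≠ 0 := by exact_mod_cast hc.ne'
    rw [Complex.ofReal_cpow hc.le, Complex.cpow_def_of_ne_zero (mul_ne_zero hcc hS0),
      Complex.cpow_def_of_ne_zero hcc, Complex.cpow_def_of_ne_zero hS0, ← Complex.exp_add,
      Complex.log_ofReal_mul hc hS0, ← Complex.ofReal_log hc.le]
    ring_nf
  rw [hpow]
  have hK := congrArg (fun x : ℝ => (x : ℂ)) (aux_const α hα)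
  rw [← hC] at hK
  have ht1 : ((t ^ (-α) : ℝ) : ℂ) * ((t ^ α : ℝ) : ℂ) = 1 := by
    rw [← Complex.ofReal_mul, ← Real.rpow_add ht]
    simp
  simp only [Complex.ofReal_mul, Complex.ofReal_pow C, Complex.ofReal_div 4] at hK
  have h4 : 4 * z * (starRingEnd ℂ) w / ((α : ℂ) * ((betaFn (α / 2) (α / 2) : ℝ) : ℂ)) =
      z * (starRingEnd ℂ) w * ((4 : ℝ) / ((α : ℂ) * ((betaFn (α / 2) (α / 2) : ℝ) : ℂ))) := by
    push_cast
    ring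
  rw [h4, ← hK]
  generalize Complex.exp (-((α ^ 2 : ℂ) / (4 * (t : ℂ))) * S) = E3
  linear_combination ((C : ℂ) ^ 2 * z * (starRingEnd ℂ) w * E3 *
    (((α ^ 2 / 4) ^ (-(α + 1)) : ℝ) : ℂ) * S ^ ((-(α + 1) : ℝ) : ℂ) *
    ((Real.Gamma (α + 1) : ℝ) : ℂ)) * ht1
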